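/- arXiv:2006.11088 — 6 statements merged into one kernel-verified Lean document; each statement's English description precedes it below -/
import Mathlib

section
/- A mapping 𝒱 : [0,1] → [0,1] is a v-transform if and only if there exists δ ∈ (0,1) and a continuous strictly increasing distribution function Ψ on [0,1] (i.e., Ψ : [0,1] → [0,1] continuous, strictly increasing, with Ψ(0) = 0 and Ψ(1) = 1) such that 𝒱(u) = (1−u) − (1−δ)·Ψ(u/δ) for u ≤ δ, and 𝒱(u) = u − δ·Ψ⁻¹((1−u)/(1−δ)) for u > δ. -/
open Set MeasureTheory ProbabilityTheory

/-- A v-transform with fulcrum `δ`: a mapping of `[0,1]` to `[0,1]` with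
`𝒱 0 = 𝒱 1 = 1`, `𝒱 δ = 0`, continuous, strictly decreasing on `[0,δ]`,
strictly increasing on `[δ,1]`, and satisfying the square property. -/
structure IsVTransform (V : ℝ → ℝ) (δ : ℝ) : Prop where
  mapsTo : ∀ u ∈ Set.Icc (0:ℝ) 1, V u ∈ Set.Icc (0:ℝ) 1
  fulcrum_mem : δ ∈ Set.Ioo (0:ℝ) 1
  map_zero : V 0 = 1
  map_one : V 1 = 1
  map_fulcrum : V δ = 0
  contOn : ContinuousOn V (Set.Icc 0 1)
  strictAntiOn : StrictAntiOn V (Set.Icc 0 δ)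
  strictMonoOn : StrictMonoOn V (Set.Icc δ 1)
  square : ∀ u ∈ Set.Icc (0:ℝ) 1, u ≠ δ →
    ∃ us ∈ Set.Icc (0:ℝ) 1, ((u < δ ∧ δ < us) ∨ (us < δ ∧ δ < u)) ∧
      V us = V u ∧ |us - u| = V u

/-- The partial inverse `𝒱⁻¹(v) = inf {u ∈ [0,1] : 𝒱(u) = v}` of a v-transform,
taking values in `[0,δ]` (the decreasing branch). -/
noncomputable def partialInverse (V : ℝ → ℝ) (v : ℝ) : ℝ :=
  sInf {u | u ∈ Set.Icc (0:ℝ) 1 ∧ V u = v}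

/-- The conditional down probability `Δ(v) = -1 / 𝒱′(𝒱⁻¹(v))`, where the derivative
is taken within `[0,δ]` (so that at the fulcrum it is the left derivative, following
the convention of the paper). -/
noncomputable def downProb (V : ℝ → ℝ) (δ : ℝ) (v : ℝ) : ℝ :=
  -1 / derivWithin V (Set.Icc 0 δ) (partialInverse V v)

/-- The stochastic inversion function `𝒱⁻¹(v,w)` of a v-transform. -/
noncomputable def stochInv (V : ℝ → ℝ) (δ : ℝ) (v w : ℝ) : ℝ :=
  if w ≤ downProb V δ v then partialInverse V v else v + partialInverse V v

/-!
Both directions rest on the dual map `u ↦ u + 𝒱 u`, which by the square property carries `[0,δ]`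
onto `[δ,1]` and preserves `𝒱`. Since `𝒱` decreases on `[0,δ]` and increases on `[δ,1]`, the dual
map is strictly decreasing, and rescaling it affinely to a self-map of `[0,1]` gives
`Ψ x = (1 - δ x - 𝒱 (δ x)) / (1 - δ)`.

The reflection `u ↦ 1 - u` preserves v-transforms, exchanging `δ` with `1 - δ` and `Ψ` with `Ψ⁻¹`,
and it turns the formula for the increasing branch into the one for the decreasing branch. Hence
only the decreasing branch has to be studied, and `Ψ⁻¹` is the function `Ψ` of the reflected
v-transform.
-/

section LeftInverse

variable {α β : Type*} {f : α → β} {g : β → α} {s : Set α}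

theorem strictMonoOn_image_of_leftInvOn [LinearOrder α] [Preorder β] (hf : StrictMonoOn f s)
    (hg : LeftInvOn g f s) : StrictMonoOn g (f '' s) := by
  rintro _ ⟨a, ha, rfl⟩ _ ⟨b, hb, rfl⟩ hab
  rw [hg ha, hg hb]
  exact (hf.lt_iff_lt ha hb).1 hab

theorem continuousOn_image_of_leftInvOn [TopologicalSpace α] [TopologicalSpace β] [T2Space β]
    (hs : IsCompact s) (hf : ContinuousOn f s) (hg : LeftInvOn g f s) :
    ContinuousOn g (f '' s) := by
  refine continuousOn_iff_isClosed.2 fun C hC ↦ ⟨f '' (s ∩ C), ?_, ?_⟩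
  · exact ((hs.inter_right hC).image_of_continuousOn (hf.mono inter_subset_left)).isClosed
  · rw [inter_comm s C, hg.image_inter', inter_assoc, inter_self]

end LeftInverse

/-- `Ψ` restricts to a continuous, strictly increasing distribution function on `[0,1]`. Its values
outside `[0,1]` are arbitrary. -/
structure IsUnitCDF (Ψ : ℝ → ℝ) : Prop where
  continuousOn : ContinuousOn Ψ (Icc 0 1)
  strictMonoOn : StrictMonoOn Ψ (Icc 0 1)
  map_zero : Ψ 0 = 0
  map_one : Ψ 1 = 1

namespace IsUnitCDF

variable {Ψ Φ : ℝ → ℝ}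

theorem image_Icc (hΨ : IsUnitCDF Ψ) : Ψ '' Icc 0 1 = Icc 0 1 := by
  simpa only [hΨ.map_zero, hΨ.map_one] using
    hΨ.continuousOn.image_Icc_of_monotoneOn zero_le_one hΨ.strictMonoOn.monotoneOn

theorem mapsTo_Icc (hΨ : IsUnitCDF Ψ) : MapsTo Ψ (Icc 0 1) (Icc 0 1) :=
  mapsTo_iff_image_subset.2 hΨ.image_Icc.subset

theorem rightInvOn_of_leftInvOn (hΨ : IsUnitCDF Ψ) (hΦ : LeftInvOn Φ Ψ (Icc 0 1)) :
    RightInvOn Φ Ψ (Icc 0 1) :=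
  hΨ.image_Icc ▸ hΦ.rightInvOn_image

theorem of_leftInvOn (hΨ : IsUnitCDF Ψ) (hΦ : LeftInvOn Φ Ψ (Icc 0 1)) : IsUnitCDF Φ where
  continuousOn :=
    hΨ.image_Icc ▸ continuousOn_image_of_leftInvOn isCompact_Icc hΨ.continuousOn hΦ
  strictMonoOn := hΨ.image_Icc ▸ strictMonoOn_image_of_leftInvOn hΨ.strictMonoOn hΦ
  map_zero := by simpa only [hΨ.map_zero] using hΦ (left_mem_Icc.2 zero_le_one)
  map_one := by simpa only [hΨ.map_one] using hΦ (right_mem_Icc.2 zero_le_one)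

end IsUnitCDF

/-- The decreasing branch of the v-transform with fulcrum `δ` and distribution function `Ψ`. The
increasing branch is `u ↦ vBranch (1 - δ) Ψ⁻¹ (1 - u)`; see `vBranch_one_sub`. -/
noncomputable def vBranch (δ : ℝ) (Ψ : ℝ → ℝ) (u : ℝ) : ℝ :=
  (1 - u) - (1 - δ) * Ψ (u / δ)

/-- The distribution function generating the v-transform `V` with fulcrum `δ`: the solution `Ψ` of
`vBranch δ Ψ = V`, see `vBranch_vGenerator`. -/
noncomputable def vGenerator (V : ℝ → ℝ) (δ x : ℝ) : ℝ :=
  (1 - δ * x - V (δ * x)) / (1 - δ)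

section Branch

variable {δ u : ℝ} {Ψ Φ V : ℝ → ℝ}

theorem vBranch_one_sub (δ : ℝ) (Φ : ℝ → ℝ) (u : ℝ) :
    vBranch (1 - δ) Φ (1 - u) = u - δ * Φ ((1 - u) / (1 - δ)) := by
  simp only [vBranch, sub_sub_cancel]

theorem vBranch_vGenerator (hδ₀ : δ ≠ 0) (hδ₁ : δ ≠ 1) (V : ℝ → ℝ) (u : ℝ) :
    vBranch δ (vGenerator V δ) u = V u := by
  rw [vBranch, vGenerator, mul_div_cancel₀ _ hδ₀, mul_div_cancel₀ _ (sub_ne_zero.2 hδ₁.symm),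
    sub_sub_cancel]

theorem vBranch_zero (hΨ : Ψ 0 = 0) : vBranch δ Ψ 0 = 1 := by
  rw [vBranch, zero_div, hΨ, mul_zero, sub_zero, sub_zero]

theorem vBranch_fulcrum (hδ : δ ≠ 0) (hΨ : Ψ 1 = 1) : vBranch δ Ψ δ = 0 := by
  rw [vBranch, div_self hδ, hΨ, mul_one, sub_self]

theorem eqOn_vBranch_reflect (hδ : δ ≠ 1) (hΦ : Φ 1 = 1) (hVδ : V δ = 0)
    (hV : ∀ u ∈ Ioc δ 1, V u = u - δ * Φ ((1 - u) / (1 - δ))) :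
    EqOn (fun u ↦ V (1 - u)) (vBranch (1 - δ) Φ) (Icc 0 (1 - δ)) := by
  intro w hw
  rcases hw.2.eq_or_lt with rfl | hlt
  · simp only [sub_sub_cancel, hVδ, vBranch_fulcrum (sub_ne_zero.2 hδ.symm) hΦ]
  · have hVw := hV (1 - w) ⟨lt_sub_comm.1 hlt, sub_le_self 1 hw.1⟩
    rwa [← vBranch_one_sub, sub_sub_cancel] at hVw

theorem mapsTo_div_Icc (hδ : 0 ≤ δ) : MapsTo (· / δ) (Icc 0 δ) (Icc 0 1) :=
  fun _ hu ↦ unitInterval.div_mem hu.1 hδ hu.2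

theorem mapsTo_mul_Icc (hδ : 0 ≤ δ) : MapsTo (δ * ·) (Icc 0 1) (Icc 0 δ) :=
  fun _ hx ↦ ⟨mul_nonneg hδ hx.1, mul_le_of_le_one_right hδ hx.2⟩

theorem continuousOn_vBranch (hδ : 0 ≤ δ) (hΨ : ContinuousOn Ψ (Icc 0 1)) :
    ContinuousOn (vBranch δ Ψ) (Icc 0 δ) := by
  have hcomp : ContinuousOn (fun u ↦ Ψ (u / δ)) (Icc 0 δ) :=
    hΨ.comp (by fun_prop) (mapsTo_div_Icc hδ)
  exact (by fun_prop : ContinuousOn (fun u ↦ 1 - u) (Icc 0 δ)).sub (continuousOn_const.mul hcomp)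

theorem strictAntiOn_vBranch (hδ₀ : 0 ≤ δ) (hδ₁ : δ ≤ 1) (hΨ : MonotoneOn Ψ (Icc 0 1)) :
    StrictAntiOn (vBranch δ Ψ) (Icc 0 δ) := by
  intro a ha b hb hab
  have hΨab : Ψ (a / δ) ≤ Ψ (b / δ) :=
    hΨ (mapsTo_div_Icc hδ₀ ha) (mapsTo_div_Icc hδ₀ hb) (div_le_div_of_nonneg_right hab.le hδ₀)
  have hscaled : (1 - δ) * Ψ (a / δ) ≤ (1 - δ) * Ψ (b / δ) :=
    mul_le_mul_of_nonneg_left hΨab (sub_nonneg.2 hδ₁)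
  unfold vBranch
  linarith

theorem IsUnitCDF.mapsTo_vBranch (hΨ : IsUnitCDF Ψ) (hδ : δ ∈ Ioo (0 : ℝ) 1) :
    MapsTo (vBranch δ Ψ) (Icc 0 δ) (Icc 0 1) := by
  simpa only [vBranch_zero hΨ.map_zero, vBranch_fulcrum hδ.1.ne' hΨ.map_one] using
    (strictAntiOn_vBranch hδ.1.le hδ.2.le hΨ.strictMonoOn.monotoneOn).antitoneOn.mapsTo_Icc

theorem IsUnitCDF.exists_dual_of_eqOn_vBranch (hΨ : IsUnitCDF Ψ) (hΦ : LeftInvOn Φ Ψ (Icc 0 1))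
    (hδ : δ ∈ Ioo (0 : ℝ) 1) (hleft : EqOn V (vBranch δ Ψ) (Icc 0 δ))
    (hright : EqOn (fun u ↦ V (1 - u)) (vBranch (1 - δ) Φ) (Icc 0 (1 - δ))) (hu : u ∈ Ico 0 δ) :
    ∃ v ∈ Ioc δ 1, V v = V u ∧ v - u = V u := by
  have hδ' : 0 < 1 - δ := sub_pos.2 hδ.2
  have hx : u / δ ∈ Icc (0 : ℝ) 1 := mapsTo_div_Icc hδ.1.le (Ico_subset_Icc_self hu)
  have hΨx₀ : 0 ≤ Ψ (u / δ) := (hΨ.mapsTo_Icc hx).1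
  have hΨx₁ : Ψ (u / δ) < 1 := hΨ.map_one ▸
    hΨ.strictMonoOn hx (right_mem_Icc.2 zero_le_one) ((div_lt_one hδ.1).2 hu.2)
  have hw : (1 - δ) * Ψ (u / δ) < 1 - δ := mul_lt_of_lt_one_right hδ' hΨx₁
  have hw₀ : 0 ≤ (1 - δ) * Ψ (u / δ) := mul_nonneg hδ'.le hΨx₀
  have hVu : V u = vBranch δ Ψ u := hleft (Ico_subset_Icc_self hu)
  refine ⟨1 - (1 - δ) * Ψ (u / δ), ⟨by linarith, sub_le_self 1 hw₀⟩, ?_, ?_⟩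
  · calc V (1 - (1 - δ) * Ψ (u / δ))
      _ = vBranch (1 - δ) Φ ((1 - δ) * Ψ (u / δ)) := hright ⟨hw₀, hw.le⟩
      _ = 1 - (1 - δ) * Ψ (u / δ) - u := by
        rw [vBranch, mul_div_cancel_left₀ _ hδ'.ne', hΦ hx, sub_sub_cancel,
          mul_div_cancel₀ _ hδ.1.ne']
      _ = V u := by rw [hVu, vBranch, sub_right_comm]
  · rw [hVu, vBranch, sub_right_comm]

theorem square_of_eqOn_vBranch (hδ : δ ∈ Ioo (0 : ℝ) 1) (hΨ : IsUnitCDF Ψ)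
    (hΦ : LeftInvOn Φ Ψ (Icc 0 1)) (hleft : EqOn V (vBranch δ Ψ) (Icc 0 δ))
    (hright : EqOn (fun u ↦ V (1 - u)) (vBranch (1 - δ) Φ) (Icc 0 (1 - δ)))
    (hu : u ∈ Icc (0 : ℝ) 1) (hne : u ≠ δ) :
    ∃ v ∈ Icc (0 : ℝ) 1, ((u < δ ∧ δ < v) ∨ (v < δ ∧ δ < u)) ∧ V v = V u ∧ |v - u| = V u := by
  rcases hne.lt_or_gt with hlt | hgt
  · obtain ⟨v, hv, hV, hdist⟩ := hΨ.exists_dual_of_eqOn_vBranch hΦ hδ hleft hright ⟨hu.1, hlt⟩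
    exact ⟨v, ⟨hδ.1.le.trans hv.1.le, hv.2⟩, Or.inl ⟨hlt, hv.1⟩, hV,
      by rw [abs_of_pos (sub_pos.2 (hlt.trans hv.1)), hdist]⟩
  · obtain ⟨v, hv, hV, hdist⟩ :=
      (hΨ.of_leftInvOn hΦ).exists_dual_of_eqOn_vBranch
        (hΨ.rightInvOn_of_leftInvOn hΦ) (Ioo.one_sub_mem hδ) hright
        (by simpa only [sub_sub_cancel] using hleft) ⟨sub_nonneg.2 hu.2, sub_lt_sub_left hgt 1⟩
    rw [sub_sub_cancel] at hV hdist
    have hvδ : 1 - v < δ := sub_lt_comm.1 hv.1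
    refine ⟨1 - v, ⟨sub_nonneg.2 hv.2, hvδ.le.trans hδ.2.le⟩, Or.inr ⟨hvδ, hgt⟩, hV, ?_⟩
    rw [abs_of_neg (sub_neg.2 (hvδ.trans hgt)), ← hdist]
    ring

theorem isVTransform_of_eqOn_vBranch (hδ : δ ∈ Ioo (0 : ℝ) 1) (hΨ : IsUnitCDF Ψ)
    (hΦ : LeftInvOn Φ Ψ (Icc 0 1)) (hleft : EqOn V (vBranch δ Ψ) (Icc 0 δ))
    (hright : EqOn (fun u ↦ V (1 - u)) (vBranch (1 - δ) Φ) (Icc 0 (1 - δ))) :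
    IsVTransform V δ := by
  have hδ' : 1 - δ ∈ Ioo (0 : ℝ) 1 := Ioo.one_sub_mem hδ
  have hΦcdf : IsUnitCDF Φ := hΨ.of_leftInvOn hΦ
  have hreflect : MapsTo (fun u : ℝ ↦ 1 - u) (Icc δ 1) (Icc 0 (1 - δ)) :=
    fun u hu ↦ ⟨sub_nonneg.2 hu.2, sub_le_sub_left hu.1 1⟩
  have hright' : EqOn V (fun u ↦ vBranch (1 - δ) Φ (1 - u)) (Icc δ 1) := fun u hu ↦ by
    simpa only [sub_sub_cancel] using hright (hreflect hu)
  refine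
    { mapsTo := fun u hu ↦ (le_total u δ).elim (fun huδ ↦ ?_) fun hδu ↦ ?_
      fulcrum_mem := hδ
      map_zero := (hleft (left_mem_Icc.2 hδ.1.le)).trans (vBranch_zero hΨ.map_zero)
      map_one := ?_
      map_fulcrum :=
        (hleft (right_mem_Icc.2 hδ.1.le)).trans (vBranch_fulcrum hδ.1.ne' hΨ.map_one)
      contOn := ?_
      strictAntiOn := ?_
      strictMonoOn := ?_
      square := fun u hu hne ↦ square_of_eqOn_vBranch hδ hΨ hΦ hleft hright hu hne }
  · exact hleft ⟨hu.1, huδ⟩ ▸ hΨ.mapsTo_vBranch hδ ⟨hu.1, huδ⟩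
  · exact hright' ⟨hδu, hu.2⟩ ▸ hΦcdf.mapsTo_vBranch hδ' (hreflect ⟨hδu, hu.2⟩)
  · simpa only [sub_zero, vBranch_zero hΦcdf.map_zero] using hright (left_mem_Icc.2 hδ'.1.le)
  · rw [← Icc_union_Icc_eq_Icc hδ.1.le hδ.2.le]
    exact ((continuousOn_vBranch hδ.1.le hΨ.continuousOn).congr hleft).union_of_isClosed
      (((continuousOn_vBranch hδ'.1.le hΦcdf.continuousOn).comp (by fun_prop) hreflect).congr
        hright') isClosed_Icc isClosed_Icc
  · exact (strictAntiOn_vBranch hδ.1.le hδ.2.le hΨ.strictMonoOn.monotoneOn).congr hleft.symm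
  · exact ((strictAntiOn_vBranch hδ'.1.le hδ'.2.le hΦcdf.strictMonoOn.monotoneOn).comp
      (fun _ _ _ _ hab ↦ sub_lt_sub_left hab 1) hreflect).congr hright'.symm

end Branch

namespace IsVTransform

variable {V : ℝ → ℝ} {δ u : ℝ}

theorem reflect (h : IsVTransform V δ) : IsVTransform (fun u ↦ V (1 - u)) (1 - δ) where
  mapsTo _ hu := h.mapsTo _ (Icc.one_sub_mem hu)
  fulcrum_mem := Ioo.one_sub_mem h.fulcrum_mem
  map_zero := by rw [sub_zero, h.map_one]
  map_one := by rw [sub_self, h.map_zero]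
  map_fulcrum := by rw [sub_sub_cancel, h.map_fulcrum]
  contOn := h.contOn.comp (by fun_prop) fun _ ↦ Icc.one_sub_mem
  strictAntiOn _ ha _ hb hab := h.strictMonoOn ⟨by linarith [hb.2], by linarith [hb.1]⟩
    ⟨by linarith [ha.2], by linarith [ha.1]⟩ (sub_lt_sub_left hab 1)
  strictMonoOn _ ha _ hb hab := h.strictAntiOn ⟨by linarith [hb.2], by linarith [hb.1]⟩
    ⟨by linarith [ha.2], by linarith [ha.1]⟩ (sub_lt_sub_left hab 1)
  square u hu hne := by
    obtain ⟨v, hv, hsides, hV, hdist⟩ :=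
      h.square (1 - u) (Icc.one_sub_mem hu) fun hu' ↦ hne (by linarith)
    refine ⟨1 - v, Icc.one_sub_mem hv, ?_, by rwa [sub_sub_cancel], ?_⟩
    · exact hsides.symm.imp (fun hs ↦ ⟨by linarith, by linarith⟩) fun hs ↦
        ⟨by linarith, by linarith⟩
    · rw [← hdist, abs_sub_comm]
      congr 1
      ring

theorem dual_mem_Icc_and_map_dual (h : IsVTransform V δ) (hu : u ∈ Icc 0 δ) :
    u + V u ∈ Icc δ 1 ∧ V (u + V u) = V u := by
  obtain ⟨hδ₀, hδ₁⟩ := h.fulcrum_mem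
  rcases hu.2.eq_or_lt with rfl | hlt
  · simp only [h.map_fulcrum, add_zero, left_mem_Icc, hδ₁.le, and_self]
  · obtain ⟨v, hv, ⟨-, hδv⟩ | ⟨-, hδu⟩, hV, hdist⟩ :=
      h.square u ⟨hu.1, hu.2.trans hδ₁.le⟩ hlt.ne
    · rw [abs_of_pos (sub_pos.2 (hlt.trans hδv))] at hdist
      rw [← hdist, add_sub_cancel, hdist]
      exact ⟨⟨hδv.le, hv.2⟩, hV⟩
    · exact absurd hδu hlt.not_gt

theorem strictAntiOn_dual (h : IsVTransform V δ) : StrictAntiOn (fun u ↦ u + V u) (Icc 0 δ) := by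
  intro a ha b hb hab
  obtain ⟨ha', hVa⟩ := h.dual_mem_Icc_and_map_dual ha
  obtain ⟨hb', hVb⟩ := h.dual_mem_Icc_and_map_dual hb
  rw [← h.strictMonoOn.lt_iff_lt hb' ha', hVa, hVb]
  exact h.strictAntiOn ha hb hab

theorem isUnitCDF_vGenerator (h : IsVTransform V δ) : IsUnitCDF (vGenerator V δ) := by
  obtain ⟨hδ₀, hδ₁⟩ := h.fulcrum_mem
  have hδ' : 0 < 1 - δ := sub_pos.2 hδ₁
  have hscale : MapsTo (δ * ·) (Icc 0 1) (Icc 0 δ) := mapsTo_mul_Icc hδ₀.le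
  refine ⟨?_, fun a ha b hb hab ↦ ?_, ?_, ?_⟩
  · have hcomp : ContinuousOn (fun x ↦ V (δ * x)) (Icc 0 1) :=
      h.contOn.comp (by fun_prop) (hscale.mono_right (Icc_subset_Icc_right hδ₁.le))
    exact ((by fun_prop : ContinuousOn (fun x ↦ 1 - δ * x) (Icc 0 1)).sub hcomp).div_const _
  · have hdual : δ * b + V (δ * b) < δ * a + V (δ * a) :=
      h.strictAntiOn_dual (hscale ha) (hscale hb) (mul_lt_mul_of_pos_left hab hδ₀)
    exact div_lt_div_of_pos_right (by linarith) hδ'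
  · rw [vGenerator, mul_zero, h.map_zero, sub_zero, sub_self, zero_div]
  · rw [vGenerator, mul_one, h.map_fulcrum, sub_zero, div_self hδ'.ne']

theorem leftInvOn_vGenerator_reflect (h : IsVTransform V δ) :
    LeftInvOn (vGenerator (fun u ↦ V (1 - u)) (1 - δ)) (vGenerator V δ) (Icc 0 1) := by
  intro x hx
  obtain ⟨hδ₀, hδ₁⟩ := h.fulcrum_mem
  have hδx : δ * x ∈ Icc 0 δ := mapsTo_mul_Icc hδ₀.le hx
  have hdual : 1 - (1 - δ) * vGenerator V δ x = δ * x + V (δ * x) := by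
    rw [vGenerator, mul_div_cancel₀ _ (sub_pos.2 hδ₁).ne']
    ring
  rw [vGenerator, hdual, (h.dual_mem_Icc_and_map_dual hδx).2, add_sub_cancel_right, sub_sub_cancel,
    mul_div_cancel_left₀ _ hδ₀.ne']

end IsVTransform

/-- Theorem 1 of the paper: a mapping `𝒱 : [0,1] → [0,1]` is a
v-transform if and only if it takes the form (2) for some fulcrum `δ ∈ (0,1)` and
some continuous strictly increasing distribution function `Ψ` on `[0,1]`. -/
theorem vtransform_characterization (V : ℝ → ℝ)
    (hV01 : ∀ u ∈ Set.Icc (0:ℝ) 1, V u ∈ Set.Icc (0:ℝ) 1) :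
    (∃ δ : ℝ, IsVTransform V δ) ↔
      (∃ δ ∈ Set.Ioo (0:ℝ) 1, ∃ Ψ Ψinv : ℝ → ℝ,
        ContinuousOn Ψ (Set.Icc 0 1) ∧ StrictMonoOn Ψ (Set.Icc 0 1) ∧
        Ψ 0 = 0 ∧ Ψ 1 = 1 ∧
        (∀ x ∈ Set.Icc (0:ℝ) 1, Ψ x ∈ Set.Icc (0:ℝ) 1) ∧
        (∀ x ∈ Set.Icc (0:ℝ) 1, Ψinv (Ψ x) = x) ∧
        (∀ x ∈ Set.Icc (0:ℝ) 1, Ψ (Ψinv x) = x) ∧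
        (∀ u ∈ Set.Icc (0:ℝ) 1, u ≤ δ → V u = (1 - u) - (1 - δ) * Ψ (u / δ)) ∧
        (∀ u ∈ Set.Icc (0:ℝ) 1, δ < u → V u = u - δ * Ψinv ((1 - u) / (1 - δ)))) := by
  constructor
  · rintro ⟨δ, h⟩
    have hΨ := h.isUnitCDF_vGenerator
    refine ⟨δ, h.fulcrum_mem, vGenerator V δ, vGenerator (fun u ↦ V (1 - u)) (1 - δ),
      hΨ.continuousOn, hΨ.strictMonoOn, hΨ.map_zero, hΨ.map_one, hΨ.mapsTo_Icc,
      h.leftInvOn_vGenerator_reflect, hΨ.rightInvOn_of_leftInvOn h.leftInvOn_vGenerator_reflect,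
      fun u _ _ ↦ ?_, fun u _ _ ↦ ?_⟩
    · exact (vBranch_vGenerator h.fulcrum_mem.1.ne' h.fulcrum_mem.2.ne V u).symm
    · have hδ' := h.reflect.fulcrum_mem
      rw [← vBranch_one_sub, vBranch_vGenerator hδ'.1.ne' hδ'.2.ne, sub_sub_cancel]
  · rintro ⟨δ, hδ, Ψ, Φ, hcont, hmono, hΨ₀, hΨ₁, -, hΦ, -, hleft, hright⟩
    have hΨ : IsUnitCDF Ψ := ⟨hcont, hmono, hΨ₀, hΨ₁⟩
    have hleft' : EqOn V (vBranch δ Ψ) (Icc 0 δ) :=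
      fun u hu ↦ hleft u ⟨hu.1, hu.2.trans hδ.2.le⟩ hu.2
    have hVδ : V δ = 0 :=
      (hleft' (right_mem_Icc.2 hδ.1.le)).trans (vBranch_fulcrum hδ.1.ne' hΨ₁)
    have hright' := eqOn_vBranch_reflect hδ.2.ne (hΨ.of_leftInvOn hΦ).map_one hVδ
      fun u hu ↦ hright u ⟨hδ.1.le.trans hu.1.le, hu.2⟩ hu.1
    exact ⟨δ, isVTransform_of_eqOn_vBranch hδ hΨ hΦ hleft' hright'⟩
end

section
/- Let 𝒱 be a v-transform with fulcrum δ and let 𝒱⁻¹ : [0,1] → [0,δ] denote its partial inverse. Then for every v ∈ [0,1], the set {u ∈ [0,1] : 𝒱(u) ≤ v} is exactly the closed interval [𝒱⁻¹(v), 𝒱⁻¹(v) + v]; in particular this set has Lebesgue measure v. -/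
open Set MeasureTheory ProbabilityTheory

/-!
A strictly V-shaped function has as sublevel set the interval between the two points at which it
attains the level. For a v-transform at level `V u`, with `u` left of the fulcrum, these points are
`u` and its dual, and the square property places the dual at `u + V u`.
-/

theorem setOf_le_eq_Icc_of_strictAntiOn_of_strictMonoOn {α β : Type*} [LinearOrder α] [Preorder β]
    {f : α → β} {a b m l r : α} (hanti : StrictAntiOn f (Icc a m))
    (hmono : StrictMonoOn f (Icc m b)) (hl : l ∈ Icc a m) (hr : r ∈ Icc m b) (hlr : f r = f l) :
    {x | x ∈ Icc a b ∧ f x ≤ f l} = Icc l r := by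
  ext x
  rcases le_total x m with hxm | hmx
  · have mem_left (hax : a ≤ x) : f x ≤ f l ↔ l ≤ x := hanti.le_iff_ge ⟨hax, hxm⟩ hl
    constructor
    · rintro ⟨hx, hfx⟩
      exact ⟨(mem_left hx.1).1 hfx, hxm.trans hr.1⟩
    · rintro ⟨hlx, hxr⟩
      have hax : a ≤ x := hl.1.trans hlx
      exact ⟨⟨hax, hxr.trans hr.2⟩, (mem_left hax).2 hlx⟩
  · have mem_right (hxb : x ≤ b) : f x ≤ f l ↔ x ≤ r := hlr ▸ hmono.le_iff_le ⟨hmx, hxb⟩ hr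
    constructor
    · rintro ⟨hx, hfx⟩
      exact ⟨hl.2.trans hmx, (mem_right hx.2).1 hfx⟩
    · rintro ⟨hlx, hxr⟩
      have hxb : x ≤ b := hxr.trans hr.2
      exact ⟨⟨hl.1.trans hlx, hxb⟩, (mem_right hxb).2 hxr⟩

namespace IsVTransform

variable {V : ℝ → ℝ} {δ u : ℝ}

theorem surjOn_Icc_zero_fulcrum (hV : IsVTransform V δ) : SurjOn V (Icc 0 δ) (Icc 0 1) := by
  obtain ⟨hδ0, hδ1⟩ := hV.fulcrum_mem
  have hcont : ContinuousOn V (Icc 0 δ) := hV.contOn.mono (Icc_subset_Icc_right hδ1.le)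
  simpa only [SurjOn, hV.map_zero, hV.map_fulcrum] using intermediate_value_Icc' hδ0.le hcont

theorem add_map_mem_Icc_and_map_add_map (hV : IsVTransform V δ) (hu : u ∈ Icc 0 δ) :
    u + V u ∈ Icc δ 1 ∧ V (u + V u) = V u := by
  have hδ1 : δ ≤ 1 := hV.fulcrum_mem.2.le
  rcases hu.2.eq_or_lt with rfl | huδ
  · simp [hV.map_fulcrum, hδ1]
  · obtain ⟨u', hu', hside, hVu', hdist⟩ := hV.square u ⟨hu.1, hu.2.trans hδ1⟩ huδ.ne
    have hδu' : δ < u' := hside.elim And.right fun h => absurd h.2 huδ.not_gt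
    have hdual : u' = u + V u := by
      rw [← hdist, abs_of_pos (sub_pos.2 (huδ.trans hδu')), add_sub_cancel]
    exact hdual ▸ ⟨⟨hδu'.le, hu'.2⟩, hVu'⟩

theorem setOf_le_map_eq_Icc (hV : IsVTransform V δ) (hu : u ∈ Icc 0 δ) :
    {x | x ∈ Icc (0 : ℝ) 1 ∧ V x ≤ V u} = Icc u (u + V u) :=
  have ⟨hdual, hVdual⟩ := hV.add_map_mem_Icc_and_map_add_map hu
  setOf_le_eq_Icc_of_strictAntiOn_of_strictMonoOn hV.strictAntiOn hV.strictMonoOn hu hdual hVdual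

theorem partialInverse_map (hV : IsVTransform V δ) (hu : u ∈ Icc 0 δ) :
    partialInverse V (V u) = u := by
  have hleast : IsLeast {x | x ∈ Icc (0 : ℝ) 1 ∧ V x = V u} u := by
    refine ⟨⟨⟨hu.1, hu.2.trans hV.fulcrum_mem.2.le⟩, rfl⟩, fun x ⟨hx, hVx⟩ => ?_⟩
    have hmem : x ∈ Icc u (u + V u) := hV.setOf_le_map_eq_Icc hu ▸ ⟨hx, hVx.le⟩
    exact hmem.1
  exact hleast.csInf_eq

end IsVTransform

/-- for a v-transform `𝒱` with fulcrum `δ` and any `v ∈ [0,1]`,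
the set `{u ∈ [0,1] : 𝒱(u) ≤ v}` is the interval `[𝒱⁻¹(v), 𝒱⁻¹(v) + v]`,
which has Lebesgue measure `v`. -/
theorem vtransform_sublevel_interval (V : ℝ → ℝ) (δ : ℝ) (hV : IsVTransform V δ)
    (v : ℝ) (hv : v ∈ Set.Icc (0:ℝ) 1) :
    {u | u ∈ Set.Icc (0:ℝ) 1 ∧ V u ≤ v} =
      Set.Icc (partialInverse V v) (partialInverse V v + v) ∧
    volume {u | u ∈ Set.Icc (0:ℝ) 1 ∧ V u ≤ v} = ENNReal.ofReal v := by
  obtain ⟨u, hu, rfl⟩ := hV.surjOn_Icc_zero_fulcrum hv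
  have hsublevel := hV.setOf_le_map_eq_Icc hu
  refine ⟨by rw [hsublevel, hV.partialInverse_map hu], ?_⟩
  rw [hsublevel, Real.volume_Icc, add_sub_cancel_left]
end

section
/- Let 𝒱 be a v-transform with fulcrum δ whose restriction to [0,δ] is continuously differentiable on (0,δ) with nonvanishing derivative, and let Δ(v) = −1/𝒱′(𝒱⁻¹(v)) be its conditional down probability. Then ∫₀¹ Δ(v) dv = δ; equivalently, if V is uniformly distributed on [0,1] then E[Δ(V)] = δ. -/
/-!
On `(0, δ)` a v-transform is a decreasing diffeomorphism onto `(0, 1)` with inverse `𝒱⁻¹`, so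
`Δ = -1 / (𝒱′ ∘ 𝒱⁻¹)` is the reciprocal of the Jacobian factor `-𝒱′` of the substitution
`v = 𝒱 u`. Hence the substituted integrand is `1`, and `∫ Δ` is the length of `(0, δ)`.
-/

open Set MeasureTheory ProbabilityTheory

theorem setIntegral_image_neg_one_div_deriv_comp_leftInv {f f' g : ℝ → ℝ} {s : Set ℝ}
    (hs : MeasurableSet s) (hf' : ∀ x ∈ s, HasDerivWithinAt f (f' x) s x) (hf : AntitoneOn f s)
    (hg : LeftInvOn g f s) (hne : ∀ x ∈ s, f' x ≠ 0) :
    ∫ y in f '' s, -1 / f' (g y) = volume.real s := by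
  have integrand_eq_one : ∀ x ∈ s, -f' x • (-1 / f' (g (f x))) = 1 := fun x hx ↦ by
    rw [hg hx, smul_eq_mul, neg_div, neg_mul_neg, mul_one_div_cancel (hne x hx)]
  calc ∫ y in f '' s, -1 / f' (g y)
      = ∫ x in s, -f' x • (-1 / f' (g (f x))) :=
        integral_image_eq_integral_deriv_smul_of_antitoneOn hs hf' hf _
    _ = ∫ _ in s, (1 : ℝ) := setIntegral_congr_fun hs integrand_eq_one
    _ = volume.real s := by rw [setIntegral_const, smul_eq_mul, mul_one]

section DecreasingBranch

variable {V : ℝ → ℝ} {δ : ℝ}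

theorem leftInvOn_partialInverse (hδ : δ ≤ 1) (hV : InjOn V (Icc 0 δ)) :
    LeftInvOn (partialInverse V) V (Icc 0 δ) := by
  intro u hu
  have hleast : IsLeast {w | w ∈ Icc (0 : ℝ) 1 ∧ V w = V u} u := by
    refine ⟨⟨⟨hu.1, hu.2.trans hδ⟩, rfl⟩, fun w ⟨hw, hwu⟩ ↦ ?_⟩
    by_contra! hlt
    exact hlt.ne (hV ⟨hw.1, hlt.le.trans hu.2⟩ hu hwu)
  exact hleast.csInf_eq

theorem setIntegral_image_Ioo_downProb (hδ₀ : 0 ≤ δ) (hδ₁ : δ ≤ 1)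
    (hanti : StrictAntiOn V (Icc 0 δ)) (hderiv : ∀ u ∈ Ioo 0 δ, deriv V u ≠ 0) :
    ∫ v in V '' Ioo 0 δ, downProb V δ v = δ := by
  have hsub : Ioo 0 δ ⊆ Icc 0 δ := Ioo_subset_Icc_self
  have hne : ∀ u ∈ Ioo 0 δ, derivWithin V (Icc 0 δ) u ≠ 0 := fun u hu ↦ by
    rw [derivWithin_of_mem_nhds (Icc_mem_nhds hu.1 hu.2)]
    exact hderiv u hu
  have hasDeriv : ∀ u ∈ Ioo 0 δ,
      HasDerivWithinAt V (derivWithin V (Icc 0 δ) u) (Ioo 0 δ) u := fun u hu ↦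
    (differentiableWithinAt_of_derivWithin_ne_zero (hne u hu)).hasDerivWithinAt.mono hsub
  calc ∫ v in V '' Ioo 0 δ, downProb V δ v
      = volume.real (Ioo 0 δ) :=
        setIntegral_image_neg_one_div_deriv_comp_leftInv measurableSet_Ioo hasDeriv
          (hanti.antitoneOn.mono hsub) ((leftInvOn_partialInverse hδ₁ hanti.injOn).mono hsub) hne
    _ = δ := by rw [Real.volume_real_Ioo_of_le hδ₀, sub_zero]

theorem integral_downProb_eq_fulcrum_general (hδ₀ : 0 ≤ δ) (hδ₁ : δ ≤ 1)
    (hcont : ContinuousOn V (Icc 0 δ)) (hanti : StrictAntiOn V (Icc 0 δ))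
    (hderiv : ∀ u ∈ Ioo 0 δ, deriv V u ≠ 0) :
    (∫ v in V δ..V 0, downProb V δ v) = δ ∧ (∫ v in Icc (V δ) (V 0), downProb V δ v) = δ := by
  have hle : V δ ≤ V 0 :=
    hanti.antitoneOn (left_mem_Icc.2 hδ₀) (right_mem_Icc.2 hδ₀) hδ₀
  have hIoo : ∫ v in Ioo (V δ) (V 0), downProb V δ v = δ := by
    rw [← hcont.image_Ioo_of_strictAntiOn hδ₀ hanti]
    exact setIntegral_image_Ioo_downProb hδ₀ hδ₁ hanti hderiv
  rw [intervalIntegral.integral_of_le hle, integral_Ioc_eq_integral_Ioo,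
    integral_Icc_eq_integral_Ioo]
  exact ⟨hIoo, hIoo⟩

end DecreasingBranch

/-- the conditional down probability integrates to the fulcrum:
`∫₀¹ Δ(v) dv = δ`; equivalently, `E[Δ(V)] = δ` for `V` uniform on `[0,1]`. -/
theorem integral_downProb_eq_fulcrum (V : ℝ → ℝ) (δ : ℝ)
    (hV : IsVTransform V δ)
    (hC1 : ContDiffOn ℝ 1 V (Set.Ioo 0 δ))
    (hderiv : ∀ u ∈ Set.Ioo (0:ℝ) δ, deriv V u ≠ 0) :
    (∫ v in (0:ℝ)..1, downProb V δ v) = δ ∧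
    (∫ v in Set.Icc (0:ℝ) 1, downProb V δ v) = δ := by
  simpa only [hV.map_fulcrum, hV.map_zero] using
    integral_downProb_eq_fulcrum_general hV.fulcrum_mem.1.le hV.fulcrum_mem.2.le
      (hV.contOn.mono (Icc_subset_Icc_right hV.fulcrum_mem.2.le)) hV.strictAntiOn hderiv
end

section
/- Let U and W be independent random variables, each uniformly distributed on [0,1], and let 𝒱 be a v-transform with fulcrum δ, differentiable at every point of [0,1] except δ, with measurable conditional down probability Δ taking values in [0,1] and satisfying E[Δ(V)] = δ for V uniform on [0,1]. Set V = 𝒱(U) and Ũ = 𝒱⁻¹(V, W), where 𝒱⁻¹(v,w) is the stochastic inversion function of 𝒱. Then P(Ũ = U) = δ² + (1−δ)² + 2·Var(Δ(V)) ≥ δ² + (1−δ)² ≥ 1/2. -/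
open Set MeasureTheory ProbabilityTheory

/-!
Write `Δ` for `downProb V δ` and `V(U)` for the transformed variable. Off the null event `U = δ`,
the stochastic inverse recovers `U` exactly when the statements `U < δ` and `W ≤ Δ(V(U))` are both
true or both false, so with `P(U < δ) = δ` the probability of recovery is
`1 - δ - P(W ≤ Δ(V(U))) + 2 P(U < δ, W ≤ Δ(V(U)))`.
The square property makes every sublevel set `{V ≤ v}` an interval of length `v`, so `V(U)` is
uniform and `P(W ≤ Δ(V(U))) = ∫ Δ`. It also gives `V' ≤ -1` on `[0, δ)`, and since `Δ = -1 / V'`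
along this branch, the change of variables `v = V u` turns
`P(U < δ, W ≤ Δ(V(U))) = ∫ u in [0, δ), Δ(V u)` into `∫ Δ²`, which is `Var Δ(V(U)) + (∫ Δ)²`.
-/

section Uniform

instance isProbabilityMeasure_restrict_Icc_zero_one :
    IsProbabilityMeasure (volume.restrict (Icc (0 : ℝ) 1)) :=
  ⟨by simp⟩

lemma volume_restrict_Icc_zero_one_Iic (x : ℝ) :
    volume.restrict (Icc (0 : ℝ) 1) (Iic x) = ENNReal.ofReal (min 1 x) := by
  rw [Measure.restrict_apply measurableSet_Iic, inter_comm, ← Ici_inter_Iic, inter_assoc,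
    Iic_inter_Iic, Ici_inter_Iic, Real.volume_Icc, sub_zero]

lemma restrict_Icc_zero_one_restrict_Iio {a : ℝ} (ha : a ≤ 1) :
    (volume.restrict (Icc (0 : ℝ) 1)).restrict (Iio a) = volume.restrict (Ico 0 a) := by
  have hset : Iio a ∩ Icc 0 1 = Ico 0 a := by
    ext x
    exact ⟨fun h ↦ ⟨h.2.1, h.1⟩, fun h ↦ ⟨h.2, h.1, h.2.le.trans ha⟩⟩
  rw [Measure.restrict_restrict measurableSet_Iio, hset]

lemma eq_volume_restrict_Icc_zero_one_of_Iic {ν : Measure ℝ} [IsProbabilityMeasure ν]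
    (h : ∀ x ∈ Icc (0 : ℝ) 1, ν (Iic x) = ENNReal.ofReal x) :
    ν = volume.restrict (Icc 0 1) := by
  refine Measure.ext_of_Iic _ _ fun x ↦ ?_
  rw [volume_restrict_Icc_zero_one_Iic]
  rcases lt_or_ge x 0 with hx₀ | hx₀
  · rw [ENNReal.ofReal_of_nonpos (min_le_of_right_le hx₀.le)]
    exact measure_mono_null (Iic_subset_Iic.2 hx₀.le) (by simpa using h 0 (by simp))
  rcases le_or_gt x 1 with hx₁ | hx₁
  · rw [min_eq_right hx₁, h x ⟨hx₀, hx₁⟩]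
  · rw [min_eq_left hx₁.le, ENNReal.ofReal_one]
    refine le_antisymm prob_le_one ?_
    calc 1 = ν (Iic 1) := by simp [h 1 (by simp)]
      _ ≤ ν (Iic x) := measure_mono (Iic_subset_Iic.2 hx₁.le)

variable {Ω α : Type*} [MeasurableSpace Ω] [MeasurableSpace α] {μ : Measure Ω} {W : Ω → ℝ}

lemma measureReal_le_of_indepFun_uniform {Y : Ω → ℝ} (hY : AEMeasurable Y μ)
    (hW : HasLaw W (volume.restrict (Icc 0 1)) μ) (hYW : IndepFun Y W μ)
    (hY01 : ∀ᵐ ω ∂μ, Y ω ∈ Icc (0 : ℝ) 1) :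
    μ.real {ω | W ω ≤ Y ω} = ∫ ω, Y ω ∂μ := by
  have : IsProbabilityMeasure μ := hW.isProbabilityMeasure
  have hpair : HasLaw (fun ω ↦ (Y ω, W ω)) ((μ.map Y).prod (volume.restrict (Icc 0 1))) μ :=
    (indepFun_iff_hasLaw_prodMk_prod ⟨hY, rfl⟩ hW).1 hYW
  have hmeas : MeasurableSet {z : ℝ × ℝ | z.2 ≤ z.1} :=
    measurableSet_le measurable_snd measurable_fst
  rw [hpair.measureReal_eq (p := fun z ↦ z.2 ≤ z.1) hmeas, measureReal_def,
    integral_eq_lintegral_of_nonneg_ae (hY01.mono fun _ h ↦ h.1) hY.aestronglyMeasurable]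
  congr 1
  calc (μ.map Y).prod (volume.restrict (Icc 0 1)) {z : ℝ × ℝ | z.2 ≤ z.1}
      = ∫⁻ y, volume.restrict (Icc (0 : ℝ) 1) (Iic y) ∂μ.map Y := Measure.prod_apply hmeas
    _ = ∫⁻ ω, ENNReal.ofReal (min 1 (Y ω)) ∂μ := by
      simp only [volume_restrict_Icc_zero_one_Iic]
      exact lintegral_map' (by fun_prop) hY
    _ = ∫⁻ ω, ENNReal.ofReal (Y ω) ∂μ :=
      lintegral_congr_ae (hY01.mono fun ω h ↦ by simp only [min_eq_right h.2])

lemma measureReal_mem_and_le_of_indepFun_uniform {X : Ω → α} {ν : Measure α} {f : α → ℝ}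
    {s : Set α} (hX : HasLaw X ν μ) (hW : HasLaw W (volume.restrict (Icc 0 1)) μ)
    (hXW : IndepFun X W μ) (hf : AEMeasurable f ν) (hf01 : ∀ᵐ x ∂ν, f x ∈ Icc (0 : ℝ) 1)
    (hs : MeasurableSet s) :
    μ.real {ω | X ω ∈ s ∧ W ω ≤ f (X ω)} = ∫ x in s, f x ∂ν := by
  obtain rfl := hX.map_eq
  have hg : AEMeasurable (s.indicator f) (μ.map X) := hf.indicator hs
  have hg01 : ∀ᵐ x ∂μ.map X, s.indicator f x ∈ Icc (0 : ℝ) 1 := by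
    filter_upwards [hf01] with x hx
    by_cases hxs : x ∈ s <;> simp [hxs, hx.1, hx.2]
  have hWpos : ∀ᵐ ω ∂μ, 0 < W ω := by
    refine (hW.ae_iff measurableSet_Ioi.mem).2 ?_
    filter_upwards [ae_restrict_mem measurableSet_Icc, Measure.ae_ne _ 0] with w hw hw₀
    exact lt_of_le_of_ne hw.1 hw₀.symm
  calc μ.real {ω | X ω ∈ s ∧ W ω ≤ f (X ω)}
      = μ.real {ω | W ω ≤ s.indicator f (X ω)} := by
        refine measureReal_congr ?_
        filter_upwards [hWpos] with ω hω
        refine propext ?_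
        change X ω ∈ s ∧ W ω ≤ f (X ω) ↔ W ω ≤ s.indicator f (X ω)
        by_cases hxs : X ω ∈ s <;> simp [hxs, hω]
    _ = ∫ ω, s.indicator f (X ω) ∂μ :=
        measureReal_le_of_indepFun_uniform (hg.comp_aemeasurable hX.aemeasurable) hW
          (hXW.comp₀ hX.aemeasurable hW.aemeasurable hg aemeasurable_id)
          (ae_of_ae_map hX.aemeasurable hg01)
    _ = ∫ x in s, f x ∂μ.map X := by
        rw [← integral_map hX.aemeasurable hg.aestronglyMeasurable, integral_indicator hs]

end Uniform

lemma probReal_setOf_mem_iff_mem {α : Type*} [MeasurableSpace α] {μ : Measure α}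
    [IsProbabilityMeasure μ] {s t : Set α} (hs : NullMeasurableSet s μ)
    (ht : NullMeasurableSet t μ) :
    μ.real {x | x ∈ s ↔ x ∈ t} = 1 - μ.real s - μ.real t + 2 * μ.real (s ∩ t) := by
  have hset : {x | x ∈ s ↔ x ∈ t} = (s ∩ t) ∪ (s ∪ t)ᶜ := by
    ext x
    simp only [mem_ofPred_eq, mem_union, mem_inter_iff, mem_compl_iff]
    tauto
  have hdisj : Disjoint (s ∩ t) (s ∪ t)ᶜ :=
    disjoint_compl_right.mono_left (inter_subset_left.trans subset_union_left)
  rw [hset, measureReal_union₀ (hs.union ht).compl hdisj.aedisjoint,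
    probReal_compl_eq_one_sub₀ (hs.union ht)]
  linarith [measureReal_union_add_inter₀ (s := s) ht]

namespace IsVTransform

variable {V : ℝ → ℝ} {δ : ℝ} (hV : IsVTransform V δ) {u : ℝ}

include hV

section Duality

lemma apply_pos (hu : u ∈ Icc (0 : ℝ) 1) (huδ : u ≠ δ) : 0 < V u := by
  have hδ := hV.fulcrum_mem
  rw [← hV.map_fulcrum]
  rcases lt_or_gt_of_ne huδ with h | h
  · exact hV.strictAntiOn ⟨hu.1, h.le⟩ ⟨hδ.1.le, le_rfl⟩ h
  · exact hV.strictMonoOn ⟨le_rfl, hδ.2.le⟩ ⟨h.le, hu.2⟩ h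

/- The square property forces the dual of `u` to be `u + V u` on the left branch and `u - V u` on
the right branch. -/
lemma apply_add_apply_and_mem_Icc (hu : u ∈ Icc 0 δ) : V (u + V u) = V u ∧ u + V u ∈ Icc δ 1 := by
  rcases hu.2.eq_or_lt with rfl | huδ
  · simp [hV.map_fulcrum, hV.fulcrum_mem.2.le]
  obtain ⟨s, hs, hside | hside, hVs, hdist⟩ :=
    hV.square u ⟨hu.1, hu.2.trans hV.fulcrum_mem.2.le⟩ huδ.ne
  · obtain rfl : u + V u = s := by
      rw [abs_of_pos (by linarith)] at hdist
      linarith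
    exact ⟨hVs, hside.2.le, hs.2⟩
  · exact absurd hside.2 huδ.not_gt

lemma apply_sub_apply_and_mem_Icc (hu : u ∈ Ioc δ 1) : V (u - V u) = V u ∧ u - V u ∈ Icc 0 δ := by
  obtain ⟨s, hs, hside | hside, hVs, hdist⟩ :=
    hV.square u ⟨hV.fulcrum_mem.1.le.trans hu.1.le, hu.2⟩ hu.1.ne'
  · exact absurd hside.1 hu.1.not_gt
  · obtain rfl : u - V u = s := by
      rw [abs_of_neg (by linarith)] at hdist
      linarith
    exact ⟨hVs, hs.1, hside.1.le⟩

lemma antitoneOn_add_apply : AntitoneOn (fun u ↦ u + V u) (Icc 0 δ) := by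
  intro u hu u' hu' huu'
  obtain ⟨hVdual, hdual⟩ := hV.apply_add_apply_and_mem_Icc hu
  obtain ⟨hVdual', hdual'⟩ := hV.apply_add_apply_and_mem_Icc hu'
  rw [← hV.strictMonoOn.le_iff_le hdual' hdual, hVdual, hVdual']
  exact hV.strictAntiOn.antitoneOn hu hu' huu'

lemma derivWithin_le_neg_one (hu : u ∈ Icc 0 δ)
    (hd : DifferentiableWithinAt ℝ V (Icc 0 δ) u) : derivWithin V (Icc 0 δ) u ≤ -1 := by
  have hsum : derivWithin (fun u ↦ u + V u) (Icc 0 δ) u ≤ 0 :=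
    hV.antitoneOn_add_apply.derivWithin_nonpos
  rw [derivWithin_fun_add differentiableWithinAt_fun_id hd,
    derivWithin_id' u _ (uniqueDiffOn_Icc hV.fulcrum_mem.1 u hu)] at hsum
  linarith

end Duality

section PartialInverse

lemma partialInverse_apply_of_mem_Icc (hu : u ∈ Icc 0 δ) : partialInverse V (V u) = u := by
  refine IsLeast.csInf_eq ⟨⟨⟨hu.1, hu.2.trans hV.fulcrum_mem.2.le⟩, rfl⟩, ?_⟩
  rintro x ⟨hx, hVx⟩
  by_contra! hxu
  exact (hV.strictAntiOn ⟨hx.1, hxu.le.trans hu.2⟩ hu hxu).ne' hVx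

lemma partialInverse_apply_of_mem_Ioc (hu : u ∈ Ioc δ 1) : partialInverse V (V u) = u - V u := by
  obtain ⟨hVdual, hdual⟩ := hV.apply_sub_apply_and_mem_Icc hu
  rw [← hV.partialInverse_apply_of_mem_Icc hdual, hVdual]

lemma stochInv_eq_self_iff (hu : u ∈ Icc (0 : ℝ) 1) (huδ : u ≠ δ) (w : ℝ) :
    stochInv V δ (V u) w = u ↔ (u < δ ↔ w ≤ downProb V δ (V u)) := by
  have hpos := hV.apply_pos hu huδ
  unfold stochInv
  rcases lt_or_gt_of_ne huδ with h | h
  · rw [hV.partialInverse_apply_of_mem_Icc ⟨hu.1, h.le⟩]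
    split_ifs with hw <;> simp [h, hw, hpos.ne']
  · rw [hV.partialInverse_apply_of_mem_Ioc ⟨h, hu.2⟩]
    split_ifs with hw <;> simp [h.not_gt, hw, hpos.ne']

end PartialInverse

section Law

lemma surjOn : SurjOn V (Icc 0 δ) (Icc 0 1) := by
  have hsub : Icc 0 δ ⊆ Icc 0 1 := Icc_subset_Icc_right hV.fulcrum_mem.2.le
  simpa only [SurjOn, hV.map_zero, hV.map_fulcrum] using
    intermediate_value_Icc' hV.fulcrum_mem.1.le (hV.contOn.mono hsub)

lemma image_Ico : V '' Ico 0 δ = Ioc 0 1 := by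
  have hδ := hV.fulcrum_mem
  refine Subset.antisymm ?_ fun v hv ↦ ?_
  · rintro _ ⟨u, hu, rfl⟩
    have hu' : u ∈ Icc (0 : ℝ) 1 := ⟨hu.1, hu.2.le.trans hδ.2.le⟩
    exact ⟨hV.apply_pos hu' hu.2.ne, (hV.mapsTo u hu').2⟩
  · obtain ⟨u, hu, rfl⟩ := hV.surjOn (Ioc_subset_Icc_self hv)
    refine ⟨u, ⟨hu.1, hu.2.lt_of_ne ?_⟩, rfl⟩
    rintro rfl
    exact hv.1.ne' hV.map_fulcrum

lemma preimage_Iic_inter_Icc (hu : u ∈ Icc 0 δ) :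
    V ⁻¹' Iic (V u) ∩ Icc 0 1 = Icc u (u + V u) := by
  obtain ⟨hVdual, hdual⟩ := hV.apply_add_apply_and_mem_Icc hu
  ext x
  rcases le_total x δ with hx | hx
  · have hle (hx₀ : 0 ≤ x) : V x ≤ V u ↔ u ≤ x := hV.strictAntiOn.le_iff_ge ⟨hx₀, hx⟩ hu
    constructor
    · rintro ⟨hVx, hx01⟩
      exact ⟨(hle hx01.1).1 hVx, hx.trans hdual.1⟩
    · rintro ⟨hux, -⟩
      have hx₀ := hu.1.trans hux
      exact ⟨(hle hx₀).2 hux, hx₀, hx.trans hV.fulcrum_mem.2.le⟩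
  · have hle (hx₁ : x ≤ 1) : V x ≤ V u ↔ x ≤ u + V u := by
      simpa only [hVdual] using hV.strictMonoOn.le_iff_le ⟨hx, hx₁⟩ hdual
    constructor
    · rintro ⟨hVx, hx01⟩
      exact ⟨hu.2.trans hx, (hle hx01.2).1 hVx⟩
    · rintro ⟨hux, hxu⟩
      have hx₁ := hxu.trans hdual.2
      exact ⟨(hle hx₁).2 hxu, hu.1.trans hux, hx₁⟩

lemma hasLaw_uniform : HasLaw V (volume.restrict (Icc 0 1)) (volume.restrict (Icc 0 1)) := by
  have hVm : AEMeasurable V (volume.restrict (Icc 0 1)) := hV.contOn.aemeasurable measurableSet_Icc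
  have : IsProbabilityMeasure ((volume.restrict (Icc (0 : ℝ) 1)).map V) :=
    Measure.isProbabilityMeasure_map hVm
  refine ⟨hVm, eq_volume_restrict_Icc_zero_one_of_Iic fun v hv ↦ ?_⟩
  obtain ⟨u, hu, rfl⟩ := hV.surjOn hv
  rw [Measure.map_apply_of_aemeasurable hVm measurableSet_Iic,
    Measure.restrict_apply' measurableSet_Icc, hV.preimage_Iic_inter_Icc hu, Real.volume_Icc,
    add_sub_cancel_left]

/- Disintegration of the uniform law along `V`: this is what makes `downProb V δ v` the
probability of `U < δ` given `V U = v`. -/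
lemma setIntegral_downProb_smul {F : Type*} [NormedAddCommGroup F] [NormedSpace ℝ F]
    (hd : ∀ u ∈ Ico 0 δ, DifferentiableWithinAt ℝ V (Icc 0 δ) u) (g : ℝ → F) :
    ∫ v in Icc 0 1, downProb V δ v • g v = ∫ u in Ico 0 δ, g (V u) := by
  rw [integral_Icc_eq_integral_Ioc, ← hV.image_Ico,
    integral_image_eq_integral_deriv_smul_of_antitoneOn measurableSet_Ico
      (fun u hu ↦ (hd u hu).hasDerivWithinAt.mono Ico_subset_Icc_self)
      (hV.strictAntiOn.antitoneOn.mono Ico_subset_Icc_self)]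
  refine setIntegral_congr_fun measurableSet_Ico fun u hu ↦ ?_
  have hu' := Ico_subset_Icc_self hu
  have hderiv : derivWithin V (Icc 0 δ) u ≠ 0 := by
    linarith [hV.derivWithin_le_neg_one hu' (hd u hu)]
  simp only [downProb, hV.partialInverse_apply_of_mem_Icc hu', smul_smul]
  rw [neg_mul_comm, neg_div, neg_neg, mul_one_div_cancel hderiv, one_smul]

end Law

section Recovery

variable {Ω : Type*} [MeasurableSpace Ω] {μ : Measure Ω} {U W : Ω → ℝ}

lemma probReal_lt_fulcrum_and_le_downProb (hU : HasLaw U (volume.restrict (Icc 0 1)) μ)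
    (hW : HasLaw W (volume.restrict (Icc 0 1)) μ) (hUW : IndepFun U W μ)
    (hd : ∀ u ∈ Ico 0 δ, DifferentiableWithinAt ℝ V (Icc 0 δ) u)
    (hΔmeas : Measurable (downProb V δ))
    (hΔrange : ∀ v ∈ Icc (0 : ℝ) 1, downProb V δ v ∈ Icc (0 : ℝ) 1) :
    μ.real {ω | U ω < δ ∧ W ω ≤ downProb V δ (V (U ω))} =
      ∫ v in Icc 0 1, downProb V δ v ^ 2 := by
  have hΔ01 : ∀ᵐ u ∂volume.restrict (Icc 0 1), downProb V δ (V u) ∈ Icc (0 : ℝ) 1 :=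
    ae_restrict_of_forall_mem measurableSet_Icc fun u hu ↦ hΔrange _ (hV.mapsTo u hu)
  calc μ.real {ω | U ω < δ ∧ W ω ≤ downProb V δ (V (U ω))}
      = ∫ u in Iio δ, downProb V δ (V u) ∂volume.restrict (Icc 0 1) :=
        measureReal_mem_and_le_of_indepFun_uniform hU hW hUW
          (hΔmeas.comp_aemeasurable hV.hasLaw_uniform.aemeasurable) hΔ01 measurableSet_Iio
    _ = ∫ u in Ico 0 δ, downProb V δ (V u) := by
        rw [restrict_Icc_zero_one_restrict_Iio hV.fulcrum_mem.2.le]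
    _ = ∫ v in Icc 0 1, downProb V δ v ^ 2 := by
        simp only [← hV.setIntegral_downProb_smul hd, smul_eq_mul, pow_two]

lemma probReal_le_downProb (hU : HasLaw U (volume.restrict (Icc 0 1)) μ)
    (hW : HasLaw W (volume.restrict (Icc 0 1)) μ) (hUW : IndepFun U W μ)
    (hΔmeas : Measurable (downProb V δ))
    (hΔrange : ∀ v ∈ Icc (0 : ℝ) 1, downProb V δ v ∈ Icc (0 : ℝ) 1) :
    μ.real {ω | W ω ≤ downProb V δ (V (U ω))} = ∫ v in Icc 0 1, downProb V δ v := by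
  have hVm := hV.hasLaw_uniform.aemeasurable
  have hVU : HasLaw (V ∘ U) (volume.restrict (Icc 0 1)) μ := hV.hasLaw_uniform.comp hU
  have hVUW : IndepFun (V ∘ U) W μ :=
    hUW.comp₀ hU.aemeasurable hW.aemeasurable (hU.map_eq ▸ hVm) aemeasurable_id
  have hΔ01 : ∀ᵐ v ∂volume.restrict (Icc 0 1), downProb V δ v ∈ Icc (0 : ℝ) 1 :=
    ae_restrict_of_forall_mem measurableSet_Icc hΔrange
  simpa using measureReal_mem_and_le_of_indepFun_uniform hVU hW hVUW hΔmeas.aemeasurable hΔ01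
    MeasurableSet.univ

lemma probReal_stochInv_eq_self (hU : HasLaw U (volume.restrict (Icc 0 1)) μ)
    (hW : HasLaw W (volume.restrict (Icc 0 1)) μ) (hUW : IndepFun U W μ)
    (hd : ∀ u ∈ Ico 0 δ, DifferentiableWithinAt ℝ V (Icc 0 δ) u)
    (hΔmeas : Measurable (downProb V δ))
    (hΔrange : ∀ v ∈ Icc (0 : ℝ) 1, downProb V δ v ∈ Icc (0 : ℝ) 1) :
    μ.real {ω | stochInv V δ (V (U ω)) (W ω) = U ω} =
      1 - δ - (∫ v in Icc 0 1, downProb V δ v) + 2 * ∫ v in Icc 0 1, downProb V δ v ^ 2 := by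
  have : IsProbabilityMeasure μ := hU.isProbabilityMeasure
  have hVU : HasLaw (V ∘ U) (volume.restrict (Icc 0 1)) μ := hV.hasLaw_uniform.comp hU
  have hUδ : ∀ᵐ ω ∂μ, U ω ∈ Icc (0 : ℝ) 1 ∧ U ω ≠ δ := by
    refine (hU.ae_iff (measurableSet_Icc.mem.and (measurableSet_singleton δ).compl.mem)).2 ?_
    exact (ae_restrict_mem measurableSet_Icc).and (Measure.ae_ne _ δ)
  have hleft : μ.real {ω | U ω < δ} = δ :=
    calc μ.real {ω | U ω < δ} = (volume.restrict (Icc (0 : ℝ) 1)).real (Iio δ) :=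
          hU.measureReal_eq measurableSet_Iio
      _ = volume.real (Ico 0 δ) := by
          rw [← measureReal_restrict_apply_univ,
            restrict_Icc_zero_one_restrict_Iio hV.fulcrum_mem.2.le,
            measureReal_restrict_apply_univ]
      _ = δ := by rw [Real.volume_real_Ico_of_le hV.fulcrum_mem.1.le, sub_zero]
  calc μ.real {ω | stochInv V δ (V (U ω)) (W ω) = U ω}
      = μ.real {ω | U ω < δ ↔ W ω ≤ downProb V δ (V (U ω))} := by
        refine measureReal_congr ?_
        filter_upwards [hUδ] with ω hω
        exact propext (hV.stochInv_eq_self_iff hω.1 hω.2 (W ω))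
    _ = 1 - μ.real {ω | U ω < δ} - μ.real {ω | W ω ≤ downProb V δ (V (U ω))} +
          2 * μ.real {ω | U ω < δ ∧ W ω ≤ downProb V δ (V (U ω))} :=
        probReal_setOf_mem_iff_mem (nullMeasurableSet_lt hU.aemeasurable aemeasurable_const)
          (nullMeasurableSet_le hW.aemeasurable (hΔmeas.comp_aemeasurable hVU.aemeasurable))
    _ = 1 - δ - (∫ v in Icc 0 1, downProb V δ v) + 2 * ∫ v in Icc 0 1, downProb V δ v ^ 2 := by
        rw [hleft, hV.probReal_le_downProb hU hW hUW hΔmeas hΔrange,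
          hV.probReal_lt_fulcrum_and_le_downProb hU hW hUW hd hΔmeas hΔrange]

lemma variance_downProb (hU : HasLaw U (volume.restrict (Icc 0 1)) μ)
    (hΔmeas : Measurable (downProb V δ))
    (hΔrange : ∀ v ∈ Icc (0 : ℝ) 1, downProb V δ v ∈ Icc (0 : ℝ) 1) :
    Var[fun ω ↦ downProb V δ (V (U ω)); μ] =
      (∫ v in Icc 0 1, downProb V δ v ^ 2) - (∫ v in Icc 0 1, downProb V δ v) ^ 2 := by
  have hVU : HasLaw (V ∘ U) (volume.restrict (Icc 0 1)) μ := hV.hasLaw_uniform.comp hU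
  have hΔ : MemLp (downProb V δ) 2 (volume.restrict (Icc 0 1)) :=
    memLp_of_bounded (ae_restrict_of_forall_mem measurableSet_Icc hΔrange)
      hΔmeas.aestronglyMeasurable 2
  calc Var[fun ω ↦ downProb V δ (V (U ω)); μ]
      = Var[downProb V δ; volume.restrict (Icc 0 1)] := by
        rw [← hVU.map_eq, variance_map hΔmeas.aemeasurable hVU.aemeasurable, Function.comp_def,
          Function.comp_def]
    _ = (∫ v in Icc 0 1, downProb V δ v ^ 2) - (∫ v in Icc 0 1, downProb V δ v) ^ 2 :=
        variance_eq_sub hΔ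

end Recovery

end IsVTransform

/-- Proposition 1 of the paper: for `U, W` independent uniform
on `[0,1]`, `V = 𝒱(U)` and `Ũ = 𝒱⁻¹(V,W)`, the probability of recovering the
original value is `P(Ũ = U) = δ² + (1-δ)² + 2 Var(Δ(V)) ≥ δ² + (1-δ)² ≥ 1/2`. -/
theorem prob_stochInv_recovers {Ω : Type*} [MeasurableSpace Ω]
    (μ : Measure Ω) [IsProbabilityMeasure μ]
    (U W : Ω → ℝ) (hU : Measurable U) (hW : Measurable W)
    (hUunif : Measure.map U μ = volume.restrict (Set.Icc 0 1))
    (hWunif : Measure.map W μ = volume.restrict (Set.Icc 0 1))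
    (hindep : IndepFun U W μ)
    (V : ℝ → ℝ) (δ : ℝ) (hV : IsVTransform V δ)
    (hdiff : ∀ u ∈ Set.Icc (0:ℝ) 1, u ≠ δ →
      DifferentiableWithinAt ℝ V (Set.Icc 0 1) u)
    (hΔmeas : Measurable (downProb V δ))
    (hΔrange : ∀ v ∈ Set.Icc (0:ℝ) 1, downProb V δ v ∈ Set.Icc (0:ℝ) 1)
    (hΔmean : (∫ v in Set.Icc (0:ℝ) 1, downProb V δ v) = δ) :
    μ {ω | stochInv V δ (V (U ω)) (W ω) = U ω} =
      ENNReal.ofReal (δ^2 + (1-δ)^2 +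
        2 * variance (fun ω => downProb V δ (V (U ω))) μ) ∧
    δ^2 + (1-δ)^2 + 2 * variance (fun ω => downProb V δ (V (U ω))) μ
      ≥ δ^2 + (1-δ)^2 ∧
    δ^2 + (1-δ)^2 ≥ (1:ℝ)/2 := by
  have hd : ∀ u ∈ Ico 0 δ, DifferentiableWithinAt ℝ V (Icc 0 δ) u := fun u hu ↦
    (hdiff u ⟨hu.1, (hu.2.trans hV.fulcrum_mem.2).le⟩ hu.2.ne).mono
      (Icc_subset_Icc_right hV.fulcrum_mem.2.le)
  have hUlaw : HasLaw U (volume.restrict (Icc 0 1)) μ := ⟨hU.aemeasurable, hUunif⟩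
  have hWlaw : HasLaw W (volume.restrict (Icc 0 1)) μ := ⟨hW.aemeasurable, hWunif⟩
  have hprob := hV.probReal_stochInv_eq_self hUlaw hWlaw hindep hd hΔmeas hΔrange
  have hvar := hV.variance_downProb hUlaw hΔmeas hΔrange
  rw [hΔmean] at hprob hvar
  refine ⟨?_, ?_, ?_⟩
  · rw [← ofReal_measureReal, hprob, hvar]
    congr 1
    ring
  · linarith [variance_nonneg (fun ω ↦ downProb V δ (V (U ω))) μ]
  · nlinarith [sq_nonneg (2 * δ - 1)]
end

section
/- Let 𝒱 be a v-transform with fulcrum δ, differentiable at every point of [0,1] except δ. For u > δ let u* = u − 𝒱(u) be the dual point of u. Then the derivatives at dual points satisfy 𝒱′(u) = 𝒱′(u*)·(1 − 𝒱′(u)), or equivalently 𝒱′(u) = 𝒱′(u*)/(1 + 𝒱′(u*)). -/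
open Set MeasureTheory ProbabilityTheory

/-!
Past the fulcrum, the square property reads `V (x - V x) = V x`. Differentiating this identity at
`u` by the chain rule gives `V' u = V' (u - V u) * (1 - V' u)`. This excludes `V' (u - V u) = -1`,
so one may solve for `V' u`. Working within `Ioc δ 1` also covers the endpoint `u = 1`, where the
derivative is one-sided.
-/

theorem eq_div_one_add_of_eq_mul_one_sub {𝕜 : Type*} [Field 𝕜] {a b : 𝕜}
    (h : a = b * (1 - a)) : a = b / (1 + b) := by
  have one_add_ne_zero : 1 + b ≠ 0 := by
    intro hb
    exact one_ne_zero (α := 𝕜) (by linear_combination h + (1 - a) * hb)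
  rw [eq_div_iff one_add_ne_zero]
  linear_combination h

theorem deriv_at_dual_points_general {𝕜 : Type*} [NontriviallyNormedField 𝕜] {f : 𝕜 → 𝕜}
    {s t : Set 𝕜} {x a b : 𝕜} (hs : UniqueDiffWithinAt 𝕜 s x) (hx : x ∈ s)
    (hmaps : MapsTo (fun y ↦ y - f y) s t) (hinv : EqOn (fun y ↦ f (y - f y)) f s)
    (ha : HasDerivWithinAt f a s x) (hb : HasDerivWithinAt f b t (x - f x)) :
    a = b * (1 - a) ∧ a = b / (1 + b) := by
  have hcomp : HasDerivWithinAt (fun y ↦ f (y - f y)) (b * (1 - a)) s x :=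
    hb.comp x ((hasDerivWithinAt_id x s).sub ha) hmaps
  have hmul : a = b * (1 - a) :=
    hs.eq_deriv s ha (hcomp.congr_of_mem hinv.symm hx)
  exact ⟨hmul, eq_div_one_add_of_eq_mul_one_sub hmul⟩

namespace IsVTransform

variable {V : ℝ → ℝ} {δ : ℝ}

theorem Ioc_subset_Icc (hV : IsVTransform V δ) : Ioc δ 1 ⊆ Icc 0 1 :=
  Ioc_subset_Icc_self.trans (Icc_subset_Icc_left hV.fulcrum_mem.1.le)

theorem Ico_subset_Icc (hV : IsVTransform V δ) : Ico 0 δ ⊆ Icc 0 1 :=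
  Ico_subset_Icc_self.trans (Icc_subset_Icc_right hV.fulcrum_mem.2.le)

theorem sub_map_mem_Ico_and_map_sub_map (hV : IsVTransform V δ) {u : ℝ} (hu : u ∈ Ioc δ 1) :
    u - V u ∈ Ico 0 δ ∧ V (u - V u) = V u := by
  obtain ⟨us, hus, hside, hmap, hdist⟩ := hV.square u (hV.Ioc_subset_Icc hu) hu.1.ne'
  have us_lt_fulcrum : us < δ := (hside.resolve_left fun h ↦ h.1.not_gt hu.1).1
  have us_eq : us = u - V u := by
    rw [abs_of_neg (sub_neg.2 (us_lt_fulcrum.trans hu.1))] at hdist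
    linarith
  rw [← us_eq]
  exact ⟨⟨hus.1, us_lt_fulcrum⟩, hmap⟩

theorem mapsTo_sub_map (hV : IsVTransform V δ) :
    MapsTo (fun u ↦ u - V u) (Ioc δ 1) (Ico 0 δ) :=
  fun _ hu ↦ (hV.sub_map_mem_Ico_and_map_sub_map hu).1

theorem eqOn_map_sub_map (hV : IsVTransform V δ) :
    EqOn (fun u ↦ V (u - V u)) V (Ioc δ 1) :=
  fun _ hu ↦ (hV.sub_map_mem_Ico_and_map_sub_map hu).2

end IsVTransform

/-- the derivative of a v-transform at a point `u > δ` and at its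
dual point `u* = u - 𝒱(u)` satisfy `𝒱′(u) = 𝒱′(u*)(1 - 𝒱′(u))`, equivalently
`𝒱′(u) = 𝒱′(u*)/(1 + 𝒱′(u*))`. -/
theorem deriv_at_dual_points (V : ℝ → ℝ) (δ : ℝ) (hV : IsVTransform V δ)
    (hdiff : ∀ u ∈ Set.Icc (0:ℝ) 1, u ≠ δ →
      DifferentiableWithinAt ℝ V (Set.Icc 0 1) u) :
    ∀ u ∈ Set.Icc (0:ℝ) 1, δ < u →
      derivWithin V (Set.Icc 0 1) u =
        derivWithin V (Set.Icc 0 1) (u - V u) * (1 - derivWithin V (Set.Icc 0 1) u) ∧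
      derivWithin V (Set.Icc 0 1) u =
        derivWithin V (Set.Icc 0 1) (u - V u) /
          (1 + derivWithin V (Set.Icc 0 1) (u - V u)) := by
  intro u hu hδu
  have hu' : u ∈ Ioc δ 1 := ⟨hδu, hu.2⟩
  have hdual : u - V u ∈ Ico 0 δ := hV.mapsTo_sub_map hu'
  exact deriv_at_dual_points_general (uniqueDiffOn_Ioc δ 1 u hu') hu' hV.mapsTo_sub_map
    hV.eqOn_map_sub_map ((hdiff u hu hδu.ne').hasDerivWithinAt.mono hV.Ioc_subset_Icc)
    ((hdiff _ (hV.Ico_subset_Icc hdual) hdual.2.ne).hasDerivWithinAt.mono hV.Ico_subset_Icc)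
end

section
/- Let T₁, T₂ : [0,∞) → ℝ be continuous and strictly increasing with T₁(0) = T₂(0) and T₁([0,∞)) ⊆ T₂([0,∞)), let μ_T ∈ ℝ, and define the volatility proxy transformation T : ℝ → ℝ by T(x) = T₁(μ_T − x) for x ≤ μ_T and T(x) = T₂(x − μ_T) for x > μ_T. Let X be a real random variable whose distribution function F_X is continuous and strictly increasing with values in (0,1), let F_{T(X)}(y) = P(T(X) ≤ y), and let 𝒱(u) = F_{T(X)}(T(F_X⁻¹(u))) be the associated v-transform. Then the profile function g_T = T₂⁻¹ ∘ T₁ satisfies, for every x ≥ 0, g_T(x) = F_X⁻¹( F_X(μ_T − x) + 𝒱(F_X(μ_T − x)) ) − μ_T. -/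
open Set MeasureTheory ProbabilityTheory

open scoped Topology

/-! The event `T(X) ≤ T₁(x)` is `μ_T - x ≤ X ≤ μ_T + g_T(x)`, since `T₂(g_T(x)) = T₁(x)`. As `F_X`
has no jump at `μ_T - x`, its probability `𝒱(F_X(μ_T - x))` is the increment
`F_X(μ_T + g_T(x)) - F_X(μ_T - x)`, and applying `F_X⁻¹` isolates `g_T(x)`. -/

section DistributionFunction

variable {α : Type*} [LinearOrder α] [TopologicalSpace α] [MeasurableSpace α]
  {ν : Measure α} [IsFiniteMeasure ν] {a b : α}

theorem measureReal_Iio_eq_measureReal_Iic [(𝓝[<] a).NeBot]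
    (ha : ContinuousWithinAt (fun z ↦ ν.real (Iic z)) (Iio a) a) :
    ν.real (Iio a) = ν.real (Iic a) := by
  apply le_antisymm (measureReal_mono Iio_subset_Iic_self)
  refine le_of_tendsto ha ?_
  filter_upwards [self_mem_nhdsWithin] with z hz
  exact measureReal_mono (Iic_subset_Iio.2 hz)

theorem measureReal_Iic_add_measureReal_Icc [OrderClosedTopology α] [OpensMeasurableSpace α]
    [(𝓝[<] a).NeBot] (ha : ContinuousWithinAt (fun z ↦ ν.real (Iic z)) (Iio a) a) (hab : a ≤ b) :
    ν.real (Iic a) + ν.real (Icc a b) = ν.real (Iic b) := by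
  have hdisj : Disjoint (Iio a) (Icc a b) :=
    disjoint_left.2 fun _ hlt hmem ↦ hmem.1.not_gt hlt
  rw [← measureReal_Iio_eq_measureReal_Iic ha, ← measureReal_union hdisj measurableSet_Icc,
    Iio_union_Icc_eq_Iic hab]

end DistributionFunction

section VolatilityProxy

variable {G β : Type*} [AddCommGroup G] [LinearOrder G] {T₁ T₂ : G → β} {m x y z : G}

/-- The volatility proxy transformation with branches `T₁`, `T₂` and change point `m`, the paper's
`μ_T`. The change point itself belongs to the `T₁` branch. -/
def volatilityProxy (T₁ T₂ : G → β) (m z : G) : β :=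
  if z ≤ m then T₁ (m - z) else T₂ (z - m)

theorem volatilityProxy_of_le (h : z ≤ m) : volatilityProxy T₁ T₂ m z = T₁ (m - z) :=
  if_pos h

theorem volatilityProxy_of_lt (h : m < z) : volatilityProxy T₁ T₂ m z = T₂ (z - m) :=
  if_neg h.not_ge

theorem eq_volatilityProxy {T : G → β}
    (hT : ∀ z, (z ≤ m → T z = T₁ (m - z)) ∧ (m < z → T z = T₂ (z - m))) :
    T = volatilityProxy T₁ T₂ m := by
  funext z
  rcases le_or_gt z m with h | h
  · rw [(hT z).1 h, volatilityProxy_of_le h]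
  · rw [(hT z).2 h, volatilityProxy_of_lt h]

variable [IsOrderedAddMonoid G]

theorem volatilityProxy_sub (hx : 0 ≤ x) : volatilityProxy T₁ T₂ m (m - x) = T₁ x := by
  rw [volatilityProxy_of_le (sub_le_self m hx), sub_sub_cancel]

theorem preimage_volatilityProxy_Iic [LinearOrder β] (hT₁ : StrictMonoOn T₁ (Ici 0))
    (hT₂ : StrictMonoOn T₂ (Ici 0)) (hx : 0 ≤ x) (hy : 0 ≤ y) (hxy : T₂ y = T₁ x) :
    volatilityProxy T₁ T₂ m ⁻¹' Iic (T₁ x) = Icc (m - x) (m + y) := by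
  ext z
  rw [mem_preimage, mem_Iic, mem_Icc]
  rcases le_or_gt z m with hz | hz
  · have hzy : z ≤ m + y := hz.trans (le_add_of_nonneg_right hy)
    rw [volatilityProxy_of_le hz, hT₁.le_iff_le (sub_nonneg.2 hz) hx, sub_le_comm,
      and_iff_left hzy]
  · have hxz : m - x ≤ z := (sub_le_self m hx).trans hz.le
    rw [volatilityProxy_of_lt hz, ← hxy, hT₂.le_iff_le (sub_nonneg.2 hz.le) hy,
      sub_le_iff_le_add', and_iff_right hxz]

end VolatilityProxy

section ProfileFunction

variable {Ω β : Type*} [MeasurableSpace Ω] [LinearOrder β] {μ : Measure Ω} [IsFiniteMeasure μ]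
  {X : Ω → ℝ} {T₁ T₂ : ℝ → β} {m : ℝ}

theorem measureReal_le_add_measureReal_volatilityProxy_le (hX : AEMeasurable X μ) {x y : ℝ}
    (hcont : ContinuousWithinAt (fun z ↦ μ.real {ω | X ω ≤ z}) (Iio (m - x)) (m - x))
    (hT₁ : StrictMonoOn T₁ (Ici 0)) (hT₂ : StrictMonoOn T₂ (Ici 0))
    (hx : 0 ≤ x) (hy : 0 ≤ y) (hxy : T₂ y = T₁ x) :
    μ.real {ω | X ω ≤ m - x} + μ.real {ω | volatilityProxy T₁ T₂ m (X ω) ≤ T₁ x} =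
      μ.real {ω | X ω ≤ m + y} := by
  have hlaw (z : ℝ) : (μ.map X).real (Iic z) = μ.real {ω | X ω ≤ z} :=
    map_measureReal_apply_of_aemeasurable hX measurableSet_Iic
  have hproxy : (μ.map X).real (Icc (m - x) (m + y)) =
      μ.real {ω | volatilityProxy T₁ T₂ m (X ω) ≤ T₁ x} := by
    rw [map_measureReal_apply_of_aemeasurable hX measurableSet_Icc,
      ← preimage_volatilityProxy_Iic hT₁ hT₂ hx hy hxy]
    rfl
  simp only [← hlaw] at hcont ⊢
  rw [← hproxy]
  exact measureReal_Iic_add_measureReal_Icc hcont (by linarith)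

theorem profile_function_formula_general (hX : AEMeasurable X μ)
    {FX : ℝ → ℝ} (hFX : ∀ z, FX z = μ.real {ω | X ω ≤ z}) (hFXcont : Continuous FX)
    {FXinv : ℝ → ℝ} (hFXinv : Function.LeftInverse FXinv FX)
    (hT₁ : StrictMonoOn T₁ (Ici 0)) (hT₂ : StrictMonoOn T₂ (Ici 0))
    (hrange : ∀ x, 0 ≤ x → ∃ y, 0 ≤ y ∧ T₂ y = T₁ x)
    {T₂inv : β → ℝ} (hT₂inv : ∀ x, 0 ≤ x → T₂inv (T₂ x) = x)
    {FTX : β → ℝ} (hFTX : ∀ t, FTX t = μ.real {ω | volatilityProxy T₁ T₂ m (X ω) ≤ t})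
    {x : ℝ} (hx : 0 ≤ x) :
    T₂inv (T₁ x) =
      FXinv (FX (m - x) + FTX (volatilityProxy T₁ T₂ m (FXinv (FX (m - x))))) - m := by
  obtain ⟨y, hy, hxy⟩ := hrange x hx
  have hincrement : FX (m - x) + FTX (T₁ x) = FX (m + y) := by
    rw [funext hFX] at hFXcont
    rw [hFX, hFX, hFTX]
    exact measureReal_le_add_measureReal_volatilityProxy_le hX hFXcont.continuousWithinAt
      hT₁ hT₂ hx hy hxy
  calc T₂inv (T₁ x) = y := by rw [← hxy, hT₂inv y hy]
    _ = FXinv (FX (m + y)) - m := by rw [hFXinv, add_sub_cancel_left]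
    _ = _ := by rw [← hincrement, hFXinv (m - x), volatilityProxy_sub hx]

end ProfileFunction

/-- Proposition 3 of McNeil (2020), as quoted in the paper: the
profile function `g_T = T₂⁻¹ ∘ T₁` of a volatility proxy transformation satisfies
`g_T(x) = F_X⁻¹(F_X(μ_T - x) + 𝒱(F_X(μ_T - x))) - μ_T` for all `x ≥ 0`, where
`𝒱(u) = F_{T(X)}(T(F_X⁻¹(u)))` is the associated v-transform. -/
theorem profile_function_formula {Ω : Type*} [MeasurableSpace Ω]
    (μ : Measure Ω) [IsProbabilityMeasure μ]
    (X : Ω → ℝ) (hX : Measurable X)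
    (FX : ℝ → ℝ) (hFXdef : ∀ x, FX x = (μ {ω | X ω ≤ x}).toReal)
    (hFXcont : Continuous FX) (hFXmono : StrictMono FX)
    (hFXrange : ∀ x, FX x ∈ Set.Ioo (0:ℝ) 1)
    (FXinv : ℝ → ℝ) (hFXinv : ∀ x, FXinv (FX x) = x)
    (hFXinv' : ∀ u ∈ Set.Ioo (0:ℝ) 1, FX (FXinv u) = u)
    (T1 T2 : ℝ → ℝ)
    (hT1cont : ContinuousOn T1 (Set.Ici 0)) (hT1mono : StrictMonoOn T1 (Set.Ici 0))
    (hT2cont : ContinuousOn T2 (Set.Ici 0)) (hT2mono : StrictMonoOn T2 (Set.Ici 0))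
    (hT10 : T1 0 = T2 0)
    (hrange : ∀ x : ℝ, 0 ≤ x → ∃ y : ℝ, 0 ≤ y ∧ T2 y = T1 x)
    (T2inv : ℝ → ℝ) (hT2inv : ∀ x : ℝ, 0 ≤ x → T2inv (T2 x) = x)
    (μT : ℝ) (T : ℝ → ℝ)
    (hTdef : ∀ x : ℝ, (x ≤ μT → T x = T1 (μT - x)) ∧ (μT < x → T x = T2 (x - μT)))
    (FTX : ℝ → ℝ) (hFTX : ∀ y, FTX y = (μ {ω | T (X ω) ≤ y}).toReal) :
    ∀ x : ℝ, 0 ≤ x →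
      T2inv (T1 x) =
        FXinv (FX (μT - x) + FTX (T (FXinv (FX (μT - x))))) - μT := by
  obtain rfl := eq_volatilityProxy hTdef
  exact fun x ↦ profile_function_formula_general hX.aemeasurable hFXdef hFXcont hFXinv hT1mono
    hT2mono hrange hT2inv hFTX
end
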